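/- There exists a constant C > 0 such that for every finite field F, writing q = |F|, d = gcd(2, q−1) and G = PSL₂(F), for each sign ε ∈ {+1, −1} the number of elements y ∈ G whose order is greater than 5 and divides (q − ε)/d differs from |G|/2 by at most C·|G|/q. -/

import Mathlib

/-- The projective special linear group `PSL₂(F) = SL₂(F) / Z(SL₂(F))`. -/
abbrev PSL2 (F : Type*) [Field F] :=
  Matrix.SpecialLinearGroup (Fin 2) F ⧸
    Subgroup.center (Matrix.SpecialLinearGroup (Fin 2) F)

/-!
By Cayley–Hamilton, an element `A` of `SL₂(F)` of trace `t` satisfies `A² = tA - 1`, so that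
`Aⁿ = Sₙ₋₁(t) A - Sₙ₋₂(t)` with `S` the rescaled Chebyshev polynomials of the second kind. If `Aⁿ`
is central then either `A` is central or `Sₙ₋₁(t) = 0`: elements whose image in `PSL₂(F)` has small
order have one of boundedly many traces.

Let `s(t) ∈ {1, 0, -1}` be the number of roots of `X² - tX + 1` in `F`, minus one. If `s(t) = 1`
then `A` is diagonalizable and `A ^ (q - 1) = 1`; if `s(t) = -1` then Frobenius swaps its two
eigenvalues, which are inverse to each other, and `A ^ (q + 1) = 1`. Any common divisor of `q - 1`
and `q + 1` divides `2`, so outside boundedly many traces the sign `s(t)` tells which of the two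
orders occurs.

Finally, exactly `q² + q s(t)` elements have trace `t`, and `∑ s(t) = -1`. Expanding the indicator
of `s = ε` as `(s² + ε s) / 2` gives half of `SL₂(F)` up to a bounded number of traces, each of
which accounts for at most `q (q + 1)` elements, a fraction `O(1 / q)` of the group.
-/

open Matrix Polynomial Finset
open Polynomial.Chebyshev (S S_eq)
open scoped MatrixGroups

lemma abs_card_sub_card_le {α : Type*} {s t u : Finset α}
    (h : ∀ a ∉ u, a ∈ s ↔ a ∈ t) : |(#s - #t : ℤ)| ≤ #u := by
  classical
  have hst : #s ≤ #t + #u :=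
    (card_le_card fun a ha => by by_cases hu : a ∈ u <;> grind).trans (card_union_le t u)
  have hts : #t ≤ #s + #u :=
    (card_le_card fun a ha => by by_cases hu : a ∈ u <;> grind).trans (card_union_le s u)
  rw [abs_le]
  omega

lemma gcd_two_sub_one_dvd_add_one {n : ℕ} (hn : 0 < n) : Nat.gcd 2 (n - 1) ∣ n + 1 := by
  rw [show n + 1 = n - 1 + 2 by omega]
  exact dvd_add (Nat.gcd_dvd_right _ _) (Nat.gcd_dvd_left _ _)

lemma le_two_of_dvd_div_gcd {k n : ℕ} (hn : 0 < n) (hsub : k ∣ (n - 1) / Nat.gcd 2 (n - 1))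
    (hadd : k ∣ (n + 1) / Nat.gcd 2 (n - 1)) : k ≤ 2 := by
  have hdvd := Nat.dvd_sub (hadd.trans (Nat.div_dvd_of_dvd (gcd_two_sub_one_dvd_add_one hn)))
    (hsub.trans (Nat.div_dvd_of_dvd (Nat.gcd_dvd_right _ _)))
  rw [show n + 1 - (n - 1) = 2 by omega] at hdvd
  exact Nat.le_of_dvd two_pos hdvd

lemma abs_sub_half_le_of_abs_two_mul_sub_le {z g n q b : ℝ} (hz : 0 < z) (hq : 2 ≤ q)
    (hcard : z * g = q ^ 3 - q) (hbound : |2 * (z * n) - z * g| ≤ b * (q * (q + 1))) :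
    |n - g / 2| ≤ b * g / q := by
  have hcancel : |2 * n - g| * (q - 1) ≤ b * g := by
    refine le_of_mul_le_mul_left ?_ hz
    calc z * (|2 * n - g| * (q - 1)) = |2 * (z * n) - z * g| * (q - 1) := by
          rw [show 2 * (z * n) - z * g = z * (2 * n - g) by ring, abs_mul, abs_of_pos hz, mul_assoc]
      _ ≤ b * (q * (q + 1)) * (q - 1) := by gcongr; linarith
      _ = z * (b * g) := by linear_combination -b * hcard
  have hhalf : |n - g / 2| = |2 * n - g| / 2 := by
    rw [show n - g / 2 = (2 * n - g) / 2 by ring, abs_div, abs_two]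
  rw [hhalf, le_div_iff₀ (by linarith)]
  nlinarith [abs_nonneg (2 * n - g)]

section CommRing

variable {R : Type*} [CommRing R]

lemma natDegree_S_le (n : ℕ) : (S R n).natDegree ≤ n := by
  induction n using Nat.twoStepInduction with
  | zero => simp
  | one => simpa using natDegree_X_le
  | more n ih₀ ih₁ =>
    push_cast at ih₁ ⊢
    rw [Chebyshev.S_add_two]
    compute_degree
    omega

lemma monic_S (n : ℕ) : (S R n).Monic := by
  refine monic_of_natDegree_le_of_coeff_eq_one n (natDegree_S_le n) ?_
  induction n using Nat.twoStepInduction with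
  | zero => simp
  | one => simp
  | more n _ ih₁ =>
    have hlow : (S R n).coeff (n + 2) = 0 :=
      coeff_eq_zero_of_natDegree_lt ((natDegree_S_le n).trans_lt (by omega))
    push_cast at ih₁ ⊢
    rw [Chebyshev.S_add_two, coeff_sub, coeff_X_mul, ih₁, hlow, sub_zero]

lemma pow_eq_eval_S {A : Type*} [Ring A] [Algebra R A] {x : A} {t : R} (hx : x ^ 2 = t • x - 1)
    (n : ℕ) :
    x ^ n = (S R (n - 1)).eval t • x - (S R (n - 2)).eval t • 1 := by
  induction n with
  | zero => simp
  | succ n ih =>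
    have hS : (S R n).eval t = t * (S R (n - 1)).eval t - (S R (n - 2)).eval t := by
      rw [S_eq]; simp
    rw [pow_succ, ih, sub_mul, smul_mul_assoc, smul_mul_assoc, one_mul, ← pow_two, hx]
    push_cast
    rw [show (n : ℤ) + 1 - 1 = n by ring, show (n : ℤ) + 1 - 2 = n - 1 by ring, hS]
    module

lemma sq_eq_trace_smul_sub_one (A : SL(2, R)) : A.1 ^ 2 = A.1.trace • A.1 - 1 := by
  nontriviality R
  have h := A.1.aeval_self_charpoly
  simp only [charpoly_fin_two, A.2, map_add, map_sub, map_mul, map_pow, aeval_X, aeval_C,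
    map_one, Algebra.algebraMap_eq_smul_one, smul_mul_assoc, one_mul] at h
  rw [← sub_eq_zero, ← h]
  abel

lemma trace_sq_eq_four_of_mem_center {A : SL(2, R)} (hA : A ∈ Subgroup.center SL(2, R)) :
    A.1.trace ^ 2 = 4 := by
  obtain ⟨c, hc, hA⟩ := Matrix.SpecialLinearGroup.mem_center_iff.1 hA
  rw [Fintype.card_fin] at hc
  have htr : A.1.trace = 2 * c := by rw [← hA]; simp [two_mul]
  rw [htr]
  linear_combination 4 * hc

/-- An element of `SL₂(R)` of trace `t` is a matrix `!![a, b; c, t - a]` with `bc = a(t - a) - 1`;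
it corresponds to the pair `(b, c)` in the fibre over `a`. -/
def traceFiberEquiv (t : R) :
    {A : SL(2, R) // A.1.trace = t} ≃ Σ a : R, {p : R × R // p.1 * p.2 = a * (t - a) - 1} where
  toFun A := ⟨A.1.1 0 0, (A.1.1 0 1, A.1.1 1 0), by
    have hdet := A.1.1.det_fin_two
    have htr := A.1.1.trace_fin_two
    rw [A.1.2] at hdet
    rw [A.2] at htr
    linear_combination hdet - A.1.1 0 0 * htr⟩
  invFun x := ⟨⟨!![x.1, x.2.1.1; x.2.1.2, t - x.1], by
    rw [det_fin_two_of]; linear_combination -x.2.2⟩, by simp [trace_fin_two]⟩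
  left_inv A := by
    have htr := A.1.1.trace_fin_two
    rw [A.2] at htr
    ext i j
    fin_cases i <;> fin_cases j <;> simp [htr]
  right_inv x := by simp

end CommRing

section Field

variable {F : Type*} [Field F]

local notation "q" => Fintype.card F

lemma mem_center_of_pow_mem_center {A : SL(2, F)} {n : ℕ}
    (hn : A ^ n ∈ Subgroup.center SL(2, F)) (hS : (S F (n - 1)).eval A.1.trace ≠ 0) :
    A ∈ Subgroup.center SL(2, F) := by
  rw [Subgroup.mem_center_iff] at hn ⊢
  intro g
  have hg := congrArg Subtype.val (hn g)
  simp only [Matrix.SpecialLinearGroup.coe_mul, Matrix.SpecialLinearGroup.coe_pow,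
    pow_eq_eval_S (sq_eq_trace_smul_sub_one A), mul_sub, sub_mul, mul_smul_comm, smul_mul_assoc,
    mul_one, one_mul, sub_left_inj] at hg
  exact Subtype.ext (smul_right_injective _ hS hg)

lemma mem_center_of_sq_eq_one (h2 : (2 : F) ≠ 0) {A : SL(2, F)} (hA : A ^ 2 = 1) :
    A ∈ Subgroup.center SL(2, F) := by
  refine mem_center_of_pow_mem_center (hA ▸ one_mem _) ?_
  intro htr
  norm_num at htr
  have h := sq_eq_trace_smul_sub_one A
  rw [← Matrix.SpecialLinearGroup.coe_pow, hA, htr, zero_smul, zero_sub] at h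
  have h00 : (1 : F) = -1 := by simpa using congrFun (congrFun h 0) 0
  exact h2 (by linear_combination h00)

lemma orderOf_mk_dvd_iff {A : SL(2, F)} {n : ℕ} :
    orderOf (A : PSL2 F) ∣ n ↔ A ^ n ∈ Subgroup.center SL(2, F) := by
  rw [orderOf_dvd_iff_pow_eq_one, ← QuotientGroup.mk_pow, QuotientGroup.eq_one_iff]

lemma pow_eq_one_of_eigenvalues {K : Type*} [Field K] [Algebra F K] {A : SL(2, F)} {a b : K} {n : ℕ}
    (hadd : a + b = algebraMap F K A.1.trace) (hmul : a * b = 1) (hne : a ≠ b) (hn : a ^ n = 1) :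
    A ^ n = 1 := by
  set t := A.1.trace with ht
  have ha : a ^ 2 = t • a - 1 := by rw [Algebra.smul_def, ← hadd]; linear_combination -hmul
  have hb : b ^ 2 = t • b - 1 := by rw [Algebra.smul_def, ← hadd]; linear_combination -hmul
  have hbn : b ^ n = 1 := by simpa [hn, hmul] using (mul_pow a b n).symm
  rw [pow_eq_eval_S ha, Algebra.smul_def, Algebra.smul_def, mul_one] at hn
  rw [pow_eq_eval_S hb, Algebra.smul_def, Algebra.smul_def, mul_one] at hbn
  have hx : (S F (n - 1)).eval t = 0 := by
    have : algebraMap F K ((S F (n - 1)).eval t) * (a - b) = 0 := by linear_combination hn - hbn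
    exact (map_eq_zero _).1 ((mul_eq_zero.1 this).resolve_right (sub_ne_zero.2 hne))
  have hy : (S F (n - 2)).eval t = -1 := by
    apply (algebraMap F K).injective
    simp only [hx, map_zero, map_neg, map_one] at hn ⊢
    linear_combination -hn
  apply Subtype.ext
  rw [Matrix.SpecialLinearGroup.coe_pow, pow_eq_eval_S (sq_eq_trace_smul_sub_one A), ← ht, hx, hy]
  simp

variable [Fintype F]

lemma pow_div_gcd_mem_center {A : SL(2, F)} {n : ℕ} (hA : A ^ n = 1)
    (hn : Nat.gcd 2 (q - 1) ∣ n) :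
    A ^ (n / Nat.gcd 2 (q - 1)) ∈ Subgroup.center SL(2, F) := by
  rcases (Nat.dvd_prime Nat.prime_two).1 (Nat.gcd_dvd_left 2 (q - 1)) with hd | hd
  · simp [hd, hA]
  · rw [hd] at hn ⊢
    have hodd : q % 2 ≠ 0 := by
      have := hd ▸ Nat.gcd_dvd_right 2 (q - 1)
      have := Fintype.card_pos (α := F)
      omega
    have h2 : (2 : F) ≠ 0 := Ring.two_ne_zero (mt FiniteField.even_card_iff_char_two.1 hodd)
    exact mem_center_of_sq_eq_one h2 (by rw [← pow_mul, Nat.div_mul_cancel hn, hA])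

lemma mem_range_algebraMap_of_pow_card_eq_self {K : Type*} [Field K] [Algebra F K]
    {a : K} (ha : a ^ q = a) : a ∈ (algebraMap F K).range := by
  have hsplits := Polynomial.splits_X_pow_nat_card_sub_X (K := F)
  rw [Nat.card_eq_fintype_card] at hsplits
  refine hsplits.mem_range_of_isRoot
    (FiniteField.X_pow_card_sub_X_ne_zero F Fintype.one_lt_card) ?_
  simp [ha]

lemma pow_card_sub_one_eq_one_of_eigenvalue {A : SL(2, F)} {a : F}
    (ha : a * (A.1.trace - a) = 1) (hne : a ≠ A.1.trace - a) :
    A ^ (q - 1) = 1 :=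
  pow_eq_one_of_eigenvalues (K := F) (add_sub_cancel _ _) ha hne
    (FiniteField.pow_card_sub_one_eq_one a (left_ne_zero_of_mul_eq_one ha))

variable [DecidableEq F]

/-- The roots of `X² - tX + 1`, that is, the eigenvalues in `F` of an element of `SL₂(F)` of
trace `t`: the two eigenvalues `a` and `t - a` have product `1`. -/
def eigenvaluesOfTrace (t : F) : Finset F :=
  {a | a * (t - a) = 1}

-- The Frobenius conjugate of an eigenvalue `a` outside `F` is the other eigenvalue `a⁻¹`.
lemma pow_card_add_one_eq_one_of_eigenvaluesOfTrace_eq_empty {A : SL(2, F)}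
    (hA : eigenvaluesOfTrace A.1.trace = ∅) :
    A ^ (q + 1) = 1 := by
  set t := A.1.trace
  let K := AlgebraicClosure F
  have hroot : ∃ a : K, a * (algebraMap F K t - a) = 1 := by
    have hdeg : (X ^ 2 - C (algebraMap F K t) * X + 1 : K[X]).degree = 2 := by compute_degree!
    obtain ⟨a, ha⟩ := IsAlgClosed.exists_root (X ^ 2 - C (algebraMap F K t) * X + 1 : K[X])
      (by rw [hdeg]; norm_num)
    refine ⟨a, ?_⟩
    simp only [IsRoot.def, eval_add, eval_sub, eval_pow, eval_mul, eval_X, eval_C, eval_one] at ha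
    linear_combination -ha
  obtain ⟨a, ha⟩ := hroot
  have hfix : a ^ q ≠ a := by
    intro hfix
    obtain ⟨c, rfl⟩ := mem_range_algebraMap_of_pow_card_eq_self hfix
    rw [← map_sub, ← map_mul, map_eq_one_iff _ (algebraMap F K).injective] at ha
    simpa [hA] using show c ∈ eigenvaluesOfTrace t by simpa [eigenvaluesOfTrace] using ha
  have hconj : a ^ q * (algebraMap F K t - a ^ q) = 1 := by
    simpa only [map_mul, map_sub, AlgHom.commutes, map_one, FiniteField.coe_frobeniusAlgHom]
      using congrArg (FiniteField.frobeniusAlgHom F K) ha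
  have hswap : a ^ q = algebraMap F K t - a := by
    have : (a ^ q - a) * (algebraMap F K t - a - a ^ q) = 0 := by linear_combination hconj - ha
    exact (sub_eq_zero.1 ((mul_eq_zero.1 this).resolve_left (sub_ne_zero.2 hfix))).symm
  refine pow_eq_one_of_eigenvalues (add_sub_cancel _ _) ha (fun h => hfix (hswap.trans h.symm)) ?_
  rw [pow_succ', hswap, ha]

/-- The type of the conjugacy classes of trace `t` in `SL₂(F)`: `1` if `X² - tX + 1` has two roots
in `F` (split tori), `-1` if it is irreducible (nonsplit tori), `0` if it has a double root. -/
def splitSign (t : F) : ℤ :=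
  #(eigenvaluesOfTrace t) - 1

lemma eigenvaluesOfTrace_eq_pair {a t : F} (ha : a * (t - a) = 1) :
    eigenvaluesOfTrace t = {a, t - a} := by
  ext b
  simp only [eigenvaluesOfTrace, mem_filter, mem_univ, true_and, mem_insert, mem_singleton]
  constructor
  · intro hb
    have : (b - a) * (b - (t - a)) = 0 := by linear_combination ha - hb
    simpa [sub_eq_zero] using this
  · rintro (rfl | rfl)
    · exact ha
    · linear_combination ha

lemma splitSign_cases (t : F) :
    (splitSign t = -1 ∧ eigenvaluesOfTrace t = ∅) ∨ (splitSign t = 0 ∧ t ^ 2 = 4) ∨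
      (splitSign t = 1 ∧ ∃ a, a * (t - a) = 1 ∧ a ≠ t - a) := by
  rcases (eigenvaluesOfTrace t).eq_empty_or_nonempty with h | ⟨a, ha⟩
  · exact .inl ⟨by simp [splitSign, h], h⟩
  · replace ha : a * (t - a) = 1 := by simpa [eigenvaluesOfTrace] using ha
    have hpair := eigenvaluesOfTrace_eq_pair ha
    by_cases hne : a = t - a
    · refine .inr <| .inl ⟨by simp [splitSign, hpair, ← hne], ?_⟩
      linear_combination 4 * ha + (2 * a - t) * hne
    · exact .inr <| .inr ⟨by simp [splitSign, hpair, card_pair hne], a, ha, hne⟩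

lemma card_prod_mul_eq (k : F) :
    (#{p : F × F | p.1 * p.2 = k} : ℤ) = q - 1 + if k = 0 then q else 0 := by
  have hrow (a : F) : (∑ b, if a * b = k then 1 else 0 : ℤ) =
      if a = 0 then (if k = 0 then q else 0) else 1 := by
    split_ifs with ha hk
    · simp [ha, hk]
    · simp [ha, Ne.symm hk]
    · simp [← eq_inv_mul_iff_mul_eq₀ ha]
  simp only [card_filter, Nat.cast_sum, Nat.cast_ite, Nat.cast_one, Nat.cast_zero,
    Fintype.sum_prod_type, hrow]
  rw [← add_sum_erase _ _ (mem_univ 0), sum_congr rfl fun a ha => if_neg (ne_of_mem_erase ha)]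
  simp [card_erase_of_mem, Nat.cast_sub Fintype.card_pos, add_comm]

lemma card_trace_eq (t : F) :
    (#{A : SL(2, F) | A.1.trace = t} : ℤ) = q ^ 2 + q * splitSign t := by
  have hsigma : #{A : SL(2, F) | A.1.trace = t} =
      ∑ a, #{p : F × F | p.1 * p.2 = a * (t - a) - 1} := by
    simp only [← Fintype.card_subtype]
    rw [Fintype.card_congr (traceFiberEquiv t), Fintype.card_sigma]
  rw [hsigma, Nat.cast_sum]
  simp only [card_prod_mul_eq, sum_add_distrib, sub_eq_zero, splitSign, eigenvaluesOfTrace,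
    Nat.cast_ite, Nat.cast_zero, ← sum_filter, sum_const, card_univ, nsmul_eq_mul]
  ring

lemma sum_splitSign : ∑ t : F, splitSign t = -1 := by
  have hcol (a : F) : (∑ t, if a * (t - a) = 1 then 1 else 0 : ℤ) = if a = 0 then 0 else 1 := by
    split_ifs with ha
    · simp [ha]
    · simp [← eq_inv_mul_iff_mul_eq₀ ha, sub_eq_iff_eq_add]
  simp only [splitSign, eigenvaluesOfTrace, card_filter, Nat.cast_sum, Nat.cast_ite, Nat.cast_one,
    Nat.cast_zero, sum_sub_distrib]
  rw [sum_comm]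
  simp only [hcol]
  rw [← add_sum_erase _ _ (mem_univ 0), sum_congr rfl fun a ha => if_neg (ne_of_mem_erase ha)]
  simp [card_erase_of_mem, Nat.cast_sub Fintype.card_pos]

lemma sum_comp_trace (f : F → ℤ) :
    ∑ A : SL(2, F), f A.1.trace = ∑ t, (q ^ 2 + q * splitSign t) * f t := by
  rw [← sum_fiberwise' univ (fun A : SL(2, F) => A.1.trace) f]
  simp [card_trace_eq]

lemma card_SL2 : (Fintype.card SL(2, F) : ℤ) = q ^ 3 - q := by
  have h := sum_comp_trace (F := F) 1
  simp only [Pi.one_apply, mul_one, sum_add_distrib, ← mul_sum, sum_splitSign, sum_const, card_univ,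
    nsmul_eq_mul] at h
  linear_combination h

lemma two_mul_card_splitSign_eq {ε : ℤ} (hε : ε ^ 2 = 1) :
    (2 * #{A : SL(2, F) | splitSign A.1.trace = ε} : ℤ) = Fintype.card SL(2, F) -
      q * (q + ε) * #{t : F | splitSign t = 0} := by
  have hs (t : F) : splitSign t = -1 ∨ splitSign t = 0 ∨ splitSign t = 1 := by
    rcases splitSign_cases t with h | h | h <;> simp [h.1]
  have hcube (t : F) : splitSign t ^ 3 = splitSign t := by
    rcases hs t with h | h | h <;> simp [h]
  have hind (t : F) : (2 * if splitSign t = ε then 1 else 0) =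
      splitSign t ^ 2 + ε * splitSign t := by
    rcases sq_eq_one_iff.1 hε with rfl | rfl <;> rcases hs t with h | h | h <;> simp [h]
  have hsq : ∑ t : F, splitSign t ^ 2 = q - #{t : F | splitSign t = 0} := by
    have (t : F) : splitSign t ^ 2 = 1 - if splitSign t = 0 then 1 else 0 := by
      rcases hs t with h | h | h <;> simp [h]
    simp only [this, sum_sub_distrib, sum_boole, sum_const, card_univ, nsmul_eq_mul, mul_one]
  calc (2 * #{A : SL(2, F) | splitSign A.1.trace = ε} : ℤ)
      = ∑ A : SL(2, F), (splitSign A.1.trace ^ 2 + ε * splitSign A.1.trace) := by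
        simp only [← hind, ← mul_sum, card_filter]
        push_cast
        rfl
    _ = ∑ t, (q ^ 2 + q * splitSign t) * (splitSign t ^ 2 + ε * splitSign t) :=
        sum_comp_trace fun t => splitSign t ^ 2 + ε * splitSign t
    _ = ∑ t : F, (q * (q + ε) * splitSign t ^ 2 + q * (q * ε + 1) * splitSign t) :=
        sum_congr rfl fun t _ => by linear_combination (q : ℤ) * hcube t
    _ = _ := by
        rw [sum_add_distrib, ← mul_sum, ← mul_sum, hsq, sum_splitSign, card_SL2]
        ring

lemma card_trace_mem_le (B : Finset F) :
    #{A : SL(2, F) | A.1.trace ∈ B} ≤ #B * (q * (q + 1)) := by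
  zify
  calc (#{A : SL(2, F) | A.1.trace ∈ B} : ℤ)
      = ∑ t ∈ B, (q ^ 2 + q * splitSign t) := by
        have h := sum_comp_trace fun t : F => if t ∈ B then 1 else 0
        simpa using h
    _ ≤ ∑ t ∈ B, (q * (q + 1) : ℤ) := by
        gcongr with t
        rcases splitSign_cases t with h | h | h <;> rw [h.1] <;> nlinarith
    _ = _ := by simp

/-- The traces to be discarded: off this set, an element of `SL₂(F)` is diagonalizable over the
algebraic closure and, by `mem_center_of_pow_mem_center`, its image in `PSL₂(F)` has order greater
than `m`. -/
noncomputable def exceptionalTraces (F : Type*) [Field F] [Fintype F] [DecidableEq F] (m : ℕ) :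
    Finset F :=
  {t | t ^ 2 = 4 ∨ ∃ k < m, (S F k).eval t = 0}

lemma card_exceptionalTraces_le (m : ℕ) : #(exceptionalTraces F m) ≤ 2 + ∑ k ∈ range m, k := by
  let p : F[X] := (X ^ 2 - C 4) * ∏ k ∈ range m, S F k
  have hp : p.Monic :=
    (monic_X_pow_sub_C 4 two_ne_zero).mul (monic_prod_of_monic _ _ fun k _ => monic_S k)
  have hdeg : p.natDegree ≤ 2 + ∑ k ∈ range m, k := by
    refine natDegree_mul_le.trans (add_le_add (natDegree_X_pow_sub_C).le ?_)
    exact (natDegree_prod_le _ _).trans (sum_le_sum fun k _ => natDegree_S_le k)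
  refine le_trans (card_le_degree_of_subset_roots fun t ht => ?_) hdeg
  simpa [p, hp.ne_zero, exceptionalTraces, eval_prod, prod_eq_zero_iff, sub_eq_zero] using ht

lemma lt_orderOf_mk {A : SL(2, F)} {m : ℕ} (hA : A.1.trace ∉ exceptionalTraces F m) :
    m < orderOf (A : PSL2 F) := by
  simp only [exceptionalTraces, mem_filter, mem_univ, true_and, not_or, not_exists, not_and] at hA
  by_contra! hm
  obtain ⟨k, hk⟩ := Nat.exists_eq_add_one.2 (orderOf_pos (A : PSL2 F))
  have hpow : A ^ (k + 1) ∈ Subgroup.center SL(2, F) := orderOf_mk_dvd_iff.1 hk.dvd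
  refine hA.1 (trace_sq_eq_four_of_mem_center (mem_center_of_pow_mem_center hpow ?_))
  simpa using hA.2 k (by omega)

lemma orderOf_mk_dvd_of_splitSign_eq_one {A : SL(2, F)} (hA : splitSign A.1.trace = 1) :
    orderOf (A : PSL2 F) ∣ (q - 1) / Nat.gcd 2 (q - 1) := by
  rcases splitSign_cases A.1.trace with h | h | ⟨-, a, ha, hne⟩
  · omega
  · omega
  · exact orderOf_mk_dvd_iff.2 <| pow_div_gcd_mem_center
      (pow_card_sub_one_eq_one_of_eigenvalue ha hne) (Nat.gcd_dvd_right _ _)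

lemma orderOf_mk_dvd_of_splitSign_eq_neg_one {A : SL(2, F)} (hA : splitSign A.1.trace = -1) :
    orderOf (A : PSL2 F) ∣ (q + 1) / Nat.gcd 2 (q - 1) := by
  have hempty : eigenvaluesOfTrace A.1.trace = ∅ := by
    rw [splitSign] at hA
    exact card_eq_zero.1 (by omega)
  exact orderOf_mk_dvd_iff.2 <| pow_div_gcd_mem_center
    (pow_card_add_one_eq_one_of_eigenvaluesOfTrace_eq_empty hempty)
    (gcd_two_sub_one_dvd_add_one Fintype.card_pos)

lemma splitSign_eq_neg_one_or_one {t : F} {m : ℕ} (ht : t ∉ exceptionalTraces F m) :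
    splitSign t = -1 ∨ splitSign t = 1 := by
  rcases splitSign_cases t with h | h | h
  · exact .inl h.1
  · exact absurd (by simp [exceptionalTraces, h.2]) ht
  · exact .inr h.1

lemma orderOf_mk_dvd_sub_iff {A : SL(2, F)} {m : ℕ} (hm : 2 ≤ m)
    (hA : A.1.trace ∉ exceptionalTraces F m) :
    orderOf (A : PSL2 F) ∣ (q - 1) / Nat.gcd 2 (q - 1) ↔ splitSign A.1.trace = 1 := by
  refine ⟨fun h => (splitSign_eq_neg_one_or_one hA).resolve_left fun hs => ?_,
    orderOf_mk_dvd_of_splitSign_eq_one⟩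
  exact (hm.trans_lt (lt_orderOf_mk hA)).not_ge <|
    le_two_of_dvd_div_gcd Fintype.card_pos h (orderOf_mk_dvd_of_splitSign_eq_neg_one hs)

lemma orderOf_mk_dvd_add_iff {A : SL(2, F)} {m : ℕ} (hm : 2 ≤ m)
    (hA : A.1.trace ∉ exceptionalTraces F m) :
    orderOf (A : PSL2 F) ∣ (q + 1) / Nat.gcd 2 (q - 1) ↔ splitSign A.1.trace = -1 := by
  refine ⟨fun h => (splitSign_eq_neg_one_or_one hA).resolve_right fun hs => ?_,
    orderOf_mk_dvd_of_splitSign_eq_neg_one⟩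
  exact (hm.trans_lt (lt_orderOf_mk hA)).not_ge <|
    le_two_of_dvd_div_gcd Fintype.card_pos (orderOf_mk_dvd_of_splitSign_eq_one hs) h

lemma abs_two_mul_card_sub_card_SL2_le {ε : ℤ} (hε : ε ^ 2 = 1) {B : Finset F}
    (hB : ∀ t, splitSign t = 0 → t ∈ B) {P : SL(2, F) → Prop} [DecidablePred P]
    (hP : ∀ A : SL(2, F), A.1.trace ∉ B → (P A ↔ splitSign A.1.trace = ε)) :
    |(2 * #{A | P A} - Fintype.card SL(2, F) : ℤ)| ≤ 3 * #B * (q * (q + 1)) := by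
  have hq : (0 : ℤ) < q := by exact_mod_cast Fintype.card_pos
  have happrox : |(#{A | P A} - #{A : SL(2, F) | splitSign A.1.trace = ε} : ℤ)| ≤
      #B * (q * (q + 1)) := by
    refine (abs_card_sub_card_le (u := {A : SL(2, F) | A.1.trace ∈ B}) ?_).trans ?_
    · simpa using hP
    · exact_mod_cast card_trace_mem_le B
  have hdouble : (#{t : F | splitSign t = 0} : ℤ) ≤ #B := by
    exact_mod_cast card_le_card fun t ht => hB t (by simpa using ht)
  have hq_add : |(q + ε : ℤ)| ≤ q + 1 := by
    rcases sq_eq_one_iff.1 hε with rfl | rfl <;> rw [abs_le] <;> omega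
  have hexact := two_mul_card_splitSign_eq (F := F) hε
  calc |(2 * #{A | P A} - Fintype.card SL(2, F) : ℤ)|
      = |2 * (#{A | P A} - #{A : SL(2, F) | splitSign A.1.trace = ε} : ℤ) -
          q * (q + ε) * #{t : F | splitSign t = 0}| := by
        congr 1; linear_combination hexact
    _ ≤ 2 * |(#{A | P A} - #{A : SL(2, F) | splitSign A.1.trace = ε} : ℤ)| +
          q * |(q + ε : ℤ)| * #{t : F | splitSign t = 0} := by
        refine (abs_sub _ _).trans_eq ?_
        simp only [abs_mul, abs_of_pos hq, abs_two, Nat.abs_cast]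
    _ ≤ 2 * (#B * (q * (q + 1))) + q * (q + 1) * #B := by gcongr
    _ = _ := by ring

lemma abs_card_sub_half_card_PSL2_le {ε : ℤ} (hε : ε ^ 2 = 1) {B : Finset F}
    (hB : ∀ t, splitSign t = 0 → t ∈ B) {P : PSL2 F → Prop}
    (hP : ∀ A : SL(2, F), A.1.trace ∉ B → (P A ↔ splitSign A.1.trace = ε)) :
    |(Nat.card {y // P y} : ℝ) - Nat.card (PSL2 F) / 2| ≤ 3 * #B * Nat.card (PSL2 F) / q := by
  classical
  have hz : (0 : ℝ) < Nat.card (Subgroup.center SL(2, F)) := by exact_mod_cast Nat.card_pos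
  have hq : (2 : ℝ) ≤ q := by exact_mod_cast Fintype.one_lt_card (α := F)
  have hpre : (#{A : SL(2, F) | P A} : ℝ) =
      Nat.card (Subgroup.center SL(2, F)) * Nat.card {y // P y} := by
    have h := QuotientGroup.card_preimage_mk (Subgroup.center SL(2, F)) {y | P y}
    rw [Nat.card_eq_fintype_card, Fintype.card_subtype] at h
    exact_mod_cast h
  have hSL : (Fintype.card SL(2, F) : ℝ) =
      Nat.card (Subgroup.center SL(2, F)) * Nat.card (PSL2 F) := by
    rw [← Nat.card_eq_fintype_card, mul_comm]
    exact_mod_cast (Subgroup.center SL(2, F)).card_eq_card_quotient_mul_card_subgroup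
  refine abs_sub_half_le_of_abs_two_mul_sub_le hz hq ?_ ?_
  · rw [← hSL]
    exact_mod_cast congrArg (Int.cast : ℤ → ℝ) (card_SL2 (F := F))
  · rw [← hpre, ← hSL]
    exact_mod_cast (Int.cast_le (R := ℝ)).2 (abs_two_mul_card_sub_card_SL2_le hε hB hP)

end Field

theorem stmt_19_general (N : ℕ) :
    ∃ C : ℝ, 0 < C ∧
      ∀ (F : Type*) [Field F] [Fintype F],
        |(Nat.card {y : PSL2 F // N < orderOf y ∧
            orderOf y ∣ (Fintype.card F - 1) / Nat.gcd 2 (Fintype.card F - 1)} : ℝ) -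
          (Nat.card (PSL2 F) : ℝ) / 2| ≤
            C * Nat.card (PSL2 F) / Fintype.card F ∧
        |(Nat.card {y : PSL2 F // N < orderOf y ∧
            orderOf y ∣ (Fintype.card F + 1) / Nat.gcd 2 (Fintype.card F - 1)} : ℝ) -
          (Nat.card (PSL2 F) : ℝ) / 2| ≤
            C * Nat.card (PSL2 F) / Fintype.card F := by
  refine ⟨3 * (2 + ∑ k ∈ range (N + 2), k : ℕ), by positivity, fun F _ _ => ?_⟩
  classical
  have hB : ∀ t, splitSign t = 0 → t ∈ exceptionalTraces F (N + 2) := fun t ht => by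
    by_contra h
    have := splitSign_eq_neg_one_or_one h
    omega
  have hlt {A : SL(2, F)} (hA : A.1.trace ∉ exceptionalTraces F (N + 2)) :
      N < orderOf (A : PSL2 F) := (Nat.lt_add_of_pos_right two_pos).trans (lt_orderOf_mk hA)
  have hcard := card_exceptionalTraces_le (F := F) (N + 2)
  constructor
  · refine (abs_card_sub_half_card_PSL2_le (ε := 1) (by norm_num) hB fun A hA => ?_).trans ?_
    · rw [and_iff_right (hlt hA), orderOf_mk_dvd_sub_iff (by omega) hA]
    · gcongr
  · refine (abs_card_sub_half_card_PSL2_le (ε := -1) (by norm_num) hB fun A hA => ?_).trans ?_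
    · rw [and_iff_right (hlt hA), orderOf_mk_dvd_add_iff (by omega) hA]
    · gcongr

theorem stmt_19 :
    ∃ C : ℝ, 0 < C ∧
      ∀ (F : Type) [Field F] [Fintype F],
        -- sign ε = +1 : elements of order > 5 dividing (q - 1)/d
        |(Nat.card {y : PSL2 F // 5 < orderOf y ∧
            orderOf y ∣ (Fintype.card F - 1) / Nat.gcd 2 (Fintype.card F - 1)} : ℝ) -
          (Nat.card (PSL2 F) : ℝ) / 2| ≤
            C * Nat.card (PSL2 F) / Fintype.card F ∧
        -- sign ε = −1 : elements of order > 5 dividing (q + 1)/d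
        |(Nat.card {y : PSL2 F // 5 < orderOf y ∧
            orderOf y ∣ (Fintype.card F + 1) / Nat.gcd 2 (Fintype.card F - 1)} : ℝ) -
          (Nat.card (PSL2 F) : ℝ) / 2| ≤
            C * Nat.card (PSL2 F) / Fintype.card F :=
  stmt_19_general 5
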